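/- Let n be a primitive non-deficient positive integer with prime factorization n = p₁^{a₁} p₂^{a₂} ⋯ p_k^{a_k} where p₁ < p₂ < ⋯ < p_k are primes, and let S = S(n) be its surplus. Then T(n) ≥ log 2 − 25/(64 p₁) + S/2 − S²/4. -/

import Mathlib

open Real Finset

/-- `T n` is the sum of the reciprocals of the distinct primes dividing `n`. -/
noncomputable def T (n : ℕ) : ℝ := ∑ p ∈ n.primeFactors, (1 : ℝ) / p

/-- `H n = ∏_{p ∣ n} p/(p-1)` over the distinct prime divisors of `n`. -/
noncomputable def H (n : ℕ) : ℝ := ∏ p ∈ n.primeFactors, (p : ℝ) / ((p : ℝ) - 1)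

/-- `n` is non-deficient if `σ(n)/n ≥ 2`. -/
def NonDeficient (n : ℕ) : Prop := 2 * n ≤ ArithmeticFunction.sigma 1 n

/-- `n` is primitive non-deficient if it is non-deficient and no proper divisor is
non-deficient. -/
def PrimitiveNonDeficient (n : ℕ) : Prop :=
  NonDeficient n ∧ ∀ d : ℕ, d ∣ n → d ≠ n → ¬ NonDeficient d

/-!
Write `H n = 2 (1 + u)`, so that `u = S / 2`, and let `q` be the least prime factor of `n`.

If `n` is odd, then `log (H n) - T n` is the sum over `p ∣ n` of `log (p / (p - 1)) - 1 / p`, a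
quantity of size about `1 / (2 p ^ 2)`. Over all odd integers from `q` on it sums to at most
`1 / (4 q - 6)` by telescoping, which is below `25 / (64 q)` once `5 ≤ q`; for `q = 3` the primes
below 23 are estimated individually. The claim follows from `u - u ^ 2 ≤ log (1 + u)`.

If `n` is even, this would cost more than `25 / 128`. Instead, `1 / H n = ∏ (1 - 1 / p)` is at least
`(1 / 2) (1 - (T n - 1 / 2))`, so that `T n ≥ 1 / 2 + u / (1 + u) ≥ 1 / 2 + (u - u ^ 2)`.
-/

theorem one_sub_sum_le_prod_one_sub {ι R : Type*} [CommRing R] [LinearOrder R]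
    [IsStrictOrderedRing R] (s : Finset ι) {f : ι → R} (hf₀ : ∀ i ∈ s, 0 ≤ f i)
    (hf₁ : ∀ i ∈ s, f i ≤ 1) : 1 - ∑ i ∈ s, f i ≤ ∏ i ∈ s, (1 - f i) := by
  induction s using cons_induction with
  | empty => simp
  | cons a s ha ih =>
    rw [forall_mem_cons] at hf₀ hf₁
    have hsum : 0 ≤ ∑ i ∈ s, f i := sum_nonneg hf₀.2
    rw [sum_cons, prod_cons]
    calc 1 - (f a + ∑ i ∈ s, f i) ≤ (1 - f a) * (1 - ∑ i ∈ s, f i) := by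
          linarith [mul_nonneg hf₀.1 hsum]
      _ ≤ (1 - f a) * ∏ i ∈ s, (1 - f i) :=
          mul_le_mul_of_nonneg_left (ih hf₀.2 hf₁.2) (sub_nonneg.2 hf₁.1)

theorem sum_le_of_le_sub_succ {M : Type*} [AddCommGroup M] [PartialOrder M] [IsOrderedAddMonoid M]
    {f g : ℕ → M} (hf : ∀ i, 0 ≤ f i) (hg : ∀ i, 0 ≤ g i) (hfg : ∀ i, f i ≤ g i - g (i + 1))
    (s : Finset ℕ) : ∑ i ∈ s, f i ≤ g 0 :=
  calc ∑ i ∈ s, f i ≤ ∑ i ∈ range (s.sup id).succ, f i :=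
        sum_le_sum_of_subset_of_nonneg s.subset_range_sup_succ fun i _ _ => hf i
    _ ≤ ∑ i ∈ range (s.sup id).succ, (g i - g (i + 1)) := sum_le_sum fun i _ => hfg i
    _ = g 0 - g (s.sup id).succ := sum_range_sub' g _
    _ ≤ g 0 := sub_le_self _ (hg _)

theorem sub_sq_le_one_sub_inv {u : ℝ} (hu : 0 ≤ u) : u - u ^ 2 ≤ 1 - (1 + u)⁻¹ := by
  have : 0 < 1 + u := by linarith
  rw [← sub_nonneg]
  have hdiff : 1 - (1 + u)⁻¹ - (u - u ^ 2) = u ^ 3 / (1 + u) := by field_simp; ring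
  rw [hdiff]
  positivity

theorem sub_sq_le_log_one_add {u : ℝ} (hu : -(1 / 2) ≤ u) : u - u ^ 2 ≤ log (1 + u) := by
  have hpos : 0 < 1 + u := by linarith
  rcases le_total 0 u with hu₀ | hu₀
  · exact (sub_sq_le_one_sub_inv hu₀).trans (one_sub_inv_le_log_of_pos hpos)
  · have hsinh : ((1 + u) - (1 + u)⁻¹) / 2 ≤ log (1 + u) := by
      rw [← sinh_log hpos]
      exact sinh_le_self_iff.2 (log_nonpos hpos.le (by linarith))
    have hdiff : ((1 + u) - (1 + u)⁻¹) / 2 - (u - u ^ 2) = u ^ 2 * (1 + 2 * u) / (2 * (1 + u)) := by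
      field_simp; ring
    have hnonneg : 0 ≤ u ^ 2 * (1 + 2 * u) / (2 * (1 + u)) :=
      div_nonneg (mul_nonneg (sq_nonneg u) (by linarith)) (by linarith)
    linarith

/-- The amount by which `log (x / (x - 1))`, the contribution of a prime `x` to `log (H n)`, exceeds
`1 / x`, its contribution to `T n`. It is meant for `1 < x`. -/
noncomputable def logExcess (x : ℝ) : ℝ := log (x / (x - 1)) - 1 / x

section logExcess

variable {x : ℝ}

theorem logExcess_nonneg (hx : 1 < x) : 0 ≤ logExcess x := by
  have : 0 < x - 1 := sub_pos.2 hx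
  have hlog := one_sub_inv_le_log_of_pos (show 0 < x / (x - 1) by positivity)
  have hinv : 1 - (x / (x - 1))⁻¹ = 1 / x := by field_simp; ring
  rw [logExcess, ← hinv]
  exact sub_nonneg.2 hlog

-- This is the `artanh y` series, as `x / (x - 1) = (1 + y) / (1 - y)` for `y = 1 / (2 x - 1)`.
theorem logExcess_le_sum_range_add (hx : 1 < x) (k : ℕ) :
    logExcess x ≤ 2 * (∑ i ∈ range k, (1 / (2 * x - 1)) ^ (2 * i + 1) / (2 * i + 1)
      + (1 / (2 * x - 1)) ^ (2 * k + 1) / (1 - (1 / (2 * x - 1)) ^ 2)) - 1 / x := by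
  have hpos : 0 < 2 * x - 1 := by linarith
  have hx' : x - 1 ≠ 0 := by linarith
  have hlt : 1 / (2 * x - 1) < 1 := (div_lt_one hpos).2 (by linarith)
  have hratio : (1 + 1 / (2 * x - 1)) / (1 - 1 / (2 * x - 1)) = x / (x - 1) := by
    rw [div_eq_div_iff (sub_pos.2 hlt).ne' hx']
    field_simp
    ring
  have hseries := log_div_le_sum_range_add (by positivity) hlt k
  rw [hratio] at hseries
  rw [logExcess]
  linarith

theorem logExcess_le (hx : 1 < x) : logExcess x ≤ 1 / (2 * x * (x - 1)) := by
  have : 0 < 2 * x - 1 := by linarith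
  have : 0 < x - 1 := sub_pos.2 hx
  refine (logExcess_le_sum_range_add hx 0).trans_eq ?_
  have hsq : 1 - (1 / (2 * x - 1)) ^ 2 = 4 * x * (x - 1) / (2 * x - 1) ^ 2 := by
    field_simp
    ring
  rw [hsq, sum_range_zero, zero_add, mul_zero, zero_add, pow_one]
  field_simp
  ring

theorem logExcess_le_sub (hx : 3 / 2 < x) :
    logExcess x ≤ 1 / (4 * x - 6) - 1 / (4 * (x + 2) - 6) := by
  have h₁ : 0 < 4 * x - 6 := by linarith
  have h₂ : 0 < 4 * (x + 2) - 6 := by linarith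
  calc logExcess x ≤ 1 / (2 * x * (x - 1)) := logExcess_le (by linarith)
    _ ≤ 1 / ((4 * x - 6) * (4 * (x + 2) - 6) / 8) :=
        one_div_le_one_div_of_le (by positivity) (by linarith)
    _ = 1 / (4 * x - 6) - 1 / (4 * (x + 2) - 6) := by
        field_simp
        ring

end logExcess

theorem sum_logExcess_le_of_odd {s : Finset ℕ} {q : ℕ} (hq : 2 ≤ q) (hq_odd : Odd q)
    (hs_odd : ∀ m ∈ s, Odd m) (hqs : ∀ m ∈ s, q ≤ m) :
    ∑ m ∈ s, logExcess m ≤ 1 / (4 * (q : ℝ) - 6) := by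
  have hq' : (2 : ℝ) ≤ q := by exact_mod_cast hq
  have hterm (i : ℕ) : (2 : ℝ) ≤ q + 2 * i := by linarith [(Nat.cast_nonneg i : (0 : ℝ) ≤ i)]
  have hreindex : ∀ m ∈ s, q + 2 * ((m - q) / 2) = m := by
    intro m hm
    obtain ⟨a, rfl⟩ := hs_odd m hm
    obtain ⟨b, rfl⟩ := hq_odd
    have := hqs _ hm
    omega
  have hinj : Set.InjOn (fun m => (m - q) / 2) (s : Set ℕ) := fun m hm k hk hmk => by
    rw [← hreindex m hm, ← hreindex k hk]
    exact congrArg (q + 2 * ·) hmk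
  calc ∑ m ∈ s, logExcess m
      = ∑ i ∈ s.image fun m => (m - q) / 2, logExcess (q + 2 * i) := by
        rw [sum_image hinj]
        refine sum_congr rfl fun m hm => ?_
        exact_mod_cast congrArg (fun k : ℕ => logExcess k) (hreindex m hm).symm
    _ ≤ 1 / (4 * ((q : ℝ) + 2 * (0 : ℕ)) - 6) :=
        sum_le_of_le_sub_succ (g := fun i : ℕ => 1 / (4 * ((q : ℝ) + 2 * i) - 6))
          (fun i => logExcess_nonneg (by linarith [hterm i]))
          (fun i => one_div_nonneg.2 (by linarith [hterm i]))
          (fun i => by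
            have h := logExcess_le_sub (show 3 / 2 < (q : ℝ) + 2 * i by linarith [hterm i])
            rw [add_assoc, ← mul_add_one] at h
            exact_mod_cast h) _
    _ = 1 / (4 * (q : ℝ) - 6) := by simp

theorem sum_logExcess_primes_Ico_le :
    ∑ p ∈ {p ∈ Ico 3 23 | Nat.Prime p}, logExcess p ≤ 25 / 192 - 1 / (4 * 23 - 6) := by
  have hprimes : {p ∈ Ico 3 23 | Nat.Prime p} = {3, 5, 7, 11, 13, 17, 19} := by decide
  have h3 := logExcess_le_sum_range_add (x := 3) (by norm_num) 2
  have h5 := logExcess_le_sum_range_add (x := 5) (by norm_num) 2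
  have h7 := logExcess_le_sum_range_add (x := 7) (by norm_num) 2
  have h11 := logExcess_le (x := 11) (by norm_num)
  have h13 := logExcess_le (x := 13) (by norm_num)
  have h17 := logExcess_le (x := 17) (by norm_num)
  have h19 := logExcess_le (x := 19) (by norm_num)
  norm_num [sum_range_succ] at h3 h5 h7 h11 h13 h17 h19
  norm_num [hprimes]
  linarith

theorem sum_logExcess_le_of_primes_ge_three {s : Finset ℕ} (hs : ∀ p ∈ s, p.Prime)
    (h3 : ∀ p ∈ s, 3 ≤ p) : ∑ p ∈ s, logExcess p ≤ 25 / 192 := by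
  rw [← sum_filter_add_sum_filter_not s (· < 23)]
  have hsmall : ∑ p ∈ s with p < 23, logExcess p ≤
      ∑ p ∈ {p ∈ Ico 3 23 | Nat.Prime p}, logExcess p := by
    refine sum_le_sum_of_subset_of_nonneg (fun p hp => ?_) fun p hp _ => ?_
    · rw [mem_filter] at hp
      exact mem_filter.2 ⟨mem_Ico.2 ⟨h3 p hp.1, hp.2⟩, hs p hp.1⟩
    · exact logExcess_nonneg (by exact_mod_cast (mem_filter.1 hp).2.one_lt)
  have hlarge : ∑ p ∈ s with ¬p < 23, logExcess p ≤ 1 / (4 * 23 - 6) := by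
    refine sum_logExcess_le_of_odd (q := 23) (by norm_num) (by decide)
      (fun p hp => ?_) fun p hp => ?_
    · have hps := (mem_filter.1 hp).1
      exact (hs p hps).odd_of_ne_two (by linarith [h3 p hps])
    · exact not_lt.1 (mem_filter.1 hp).2
  linarith [sum_logExcess_primes_Ico_le]

theorem sum_logExcess_le_of_primes_ge {s : Finset ℕ} {q : ℕ} (hq : 3 ≤ q) (hq_odd : Odd q)
    (hs : ∀ p ∈ s, p.Prime) (hqs : ∀ p ∈ s, q ≤ p) :
    ∑ p ∈ s, logExcess p ≤ 25 / (64 * (q : ℝ)) := by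
  obtain rfl | hq5 : q = 3 ∨ 5 ≤ q := by
    obtain ⟨k, rfl⟩ := hq_odd
    omega
  · convert sum_logExcess_le_of_primes_ge_three hs hqs using 1
    norm_num
  · have hq5' : (5 : ℝ) ≤ q := by exact_mod_cast hq5
    have hs_odd : ∀ p ∈ s, Odd p := fun p hp =>
      (hs p hp).odd_of_ne_two (by linarith [hqs p hp])
    refine (sum_logExcess_le_of_odd (by linarith) hq_odd hs_odd hqs).trans ?_
    rw [div_le_div_iff₀ (by linarith) (by linarith)]
    linarith

section primeFactors

variable {n p : ℕ}

theorem one_lt_cast_of_mem_primeFactors (hp : p ∈ n.primeFactors) : (1 : ℝ) < p := by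
  exact_mod_cast (Nat.prime_of_mem_primeFactors hp).one_lt

theorem one_le_div_sub_one_of_mem_primeFactors (hp : p ∈ n.primeFactors) :
    1 ≤ (p : ℝ) / (p - 1) := by
  have := one_lt_cast_of_mem_primeFactors hp
  exact (one_le_div (by linarith)).2 (by linarith)

theorem one_le_H (n : ℕ) : 1 ≤ H n :=
  one_le_prod fun _ => one_le_div_sub_one_of_mem_primeFactors

theorem H_eq_mul_prod_erase (hp : p ∈ n.primeFactors) :
    H n = (p : ℝ) / (p - 1) * ∏ r ∈ n.primeFactors.erase p, (r : ℝ) / (r - 1) :=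
  (mul_prod_erase _ _ hp).symm

theorem div_sub_one_le_H (hp : p ∈ n.primeFactors) : (p : ℝ) / (p - 1) ≤ H n := by
  rw [H_eq_mul_prod_erase hp]
  refine le_mul_of_one_le_right ?_ (one_le_prod fun r hr => ?_)
  · exact zero_le_one.trans (one_le_div_sub_one_of_mem_primeFactors hp)
  · exact one_le_div_sub_one_of_mem_primeFactors (mem_of_mem_erase hr)

theorem one_div_add_one_sub_le_T (hp : p ∈ n.primeFactors) :
    1 / (p : ℝ) + (1 - (p : ℝ) / (p - 1) / H n) ≤ T n := by
  have hone_lt : ∀ r ∈ n.primeFactors.erase p, (1 : ℝ) < r := fun r hr =>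
    one_lt_cast_of_mem_primeFactors (mem_of_mem_erase hr)
  have hratio : (p : ℝ) / (p - 1) / H n = ∏ r ∈ n.primeFactors.erase p, (1 - 1 / (r : ℝ)) := by
    have hp_ne : (p : ℝ) / (p - 1) ≠ 0 :=
      (zero_lt_one.trans_le (one_le_div_sub_one_of_mem_primeFactors hp)).ne'
    rw [H_eq_mul_prod_erase hp, div_mul_cancel_left₀ hp_ne, ← prod_inv_distrib]
    refine prod_congr rfl fun r hr => ?_
    have := hone_lt r hr
    field_simp
  have hprod : 1 - ∑ r ∈ n.primeFactors.erase p, 1 / (r : ℝ) ≤ _ :=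
    one_sub_sum_le_prod_one_sub _ (fun _ _ => by positivity) fun r hr =>
      (div_le_one (zero_lt_one.trans (hone_lt r hr))).2 (hone_lt r hr).le
  rw [T, ← add_sum_erase _ _ hp, hratio]
  linarith

theorem sum_logExcess_primeFactors (n : ℕ) :
    ∑ p ∈ n.primeFactors, logExcess p = log (H n) - T n := by
  simp only [logExcess]
  rw [sum_sub_distrib, H, T, log_prod]
  exact fun p hp =>
    (zero_lt_one.trans_le (one_le_div_sub_one_of_mem_primeFactors hp)).ne'

theorem log_H_sub_div_minFac_le_T_of_odd (hn : Odd n) :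
    log (H n) - 25 / (64 * (n.minFac : ℝ)) ≤ T n := by
  suffices ∑ p ∈ n.primeFactors, logExcess p ≤ 25 / (64 * (n.minFac : ℝ)) by
    linarith [sum_logExcess_primeFactors n]
  obtain rfl | hn1 := eq_or_ne n 1
  · norm_num
  have hodd : Odd n.minFac := hn.of_dvd_nat n.minFac_dvd
  have htwo := (Nat.minFac_prime hn1).two_le
  refine sum_logExcess_le_of_primes_ge ?_ hodd (fun _ => Nat.prime_of_mem_primeFactors)
    fun p hp => ?_
  · obtain ⟨k, hk⟩ := hodd
    omega
  · exact Nat.minFac_le_of_dvd (Nat.prime_of_mem_primeFactors hp).two_le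
      (Nat.dvd_of_mem_primeFactors hp)

end primeFactors

theorem half_add_sub_sq_le_T_of_even {n : ℕ} {u : ℝ} (hn : n ≠ 0) (heven : Even n)
    (hu : H n = 2 * (1 + u)) : 1 / 2 + (u - u ^ 2) ≤ T n := by
  have hmem : 2 ∈ n.primeFactors := Nat.mem_primeFactors.2 ⟨Nat.prime_two, heven.two_dvd, hn⟩
  have hH : 2 ≤ H n := by simpa [show (2 : ℝ) - 1 = 1 by norm_num] using div_sub_one_le_H hmem
  have hT : 1 / 2 + (1 - 2 / H n) ≤ T n := by
    simpa [show (2 : ℝ) - 1 = 1 by norm_num] using one_div_add_one_sub_le_T hmem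
  have hinv : 2 / H n = (1 + u)⁻¹ := by
    rw [hu, div_mul_cancel_left₀ two_ne_zero]
  rw [hinv] at hT
  linarith [sub_sq_le_one_sub_inv (show 0 ≤ u by linarith)]

theorem stmt_0_general (n : ℕ) (hn : 0 < n) :
    T n ≥ log 2 - 25 / (64 * (n.minFac : ℝ)) + (H n - 2) / 2 - (H n - 2) ^ 2 / 4 := by
  obtain ⟨u, hu⟩ : ∃ u, H n = 2 * (1 + u) := ⟨H n / 2 - 1, by ring⟩
  suffices log 2 - 25 / (64 * (n.minFac : ℝ)) + (u - u ^ 2) ≤ T n by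
    rw [hu]
    linarith
  rcases n.even_or_odd with heven | hodd
  · have hlog : log 2 - 25 / 128 ≤ 1 / 2 := by linarith [log_two_lt_d9]
    have hminFac : n.minFac = 2 := (Nat.minFac_eq_two_iff n).2 heven.two_dvd
    have hT := half_add_sub_sq_le_T_of_even hn.ne' heven hu
    rw [hminFac]
    norm_num
    linarith
  · have hu_ge : -(1 / 2) ≤ u := by linarith [one_le_H n]
    have hlog : log (H n) = log 2 + log (1 + u) := by
      rw [hu, log_mul two_ne_zero (by linarith)]
    linarith [log_H_sub_div_minFac_le_T_of_odd hodd, sub_sq_le_log_one_add hu_ge]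

theorem stmt_0 (n : ℕ) (hn : 0 < n) (hpnd : PrimitiveNonDeficient n)
    (S : ℝ) (hS : S = H n - 2) :
    T n ≥ Real.log 2 - 25 / (64 * (n.minFac : ℝ)) + S / 2 - S ^ 2 / 4 := by
  subst hS
  exact stmt_0_general n hn
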